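/- Fix u₀ ∈ (0,1). For a function F : ℝ → ℝ, the following are equivalent: (1) F applied entrywise maps M({−1,−u₀}) into M([0,∞)) and maps M₄({−1,0}) together with M₄({−u}) for every u ∈ (0,1) into M₄([0,∞)); (2) F applied entrywise sends M([−1,0]) to M([0,1]); (3) there exists an absolutely monotonic entire function F̃ such that F(x) = F̃(x) for x > 0 and F(x) = F̃(−x) for x < 0, and moreover 0 ≤ F(0) ≤ lim_{ε→0} F(ε). -/

import Mathlib

open MeasureTheory Filter Set
open scoped ENNReal

/-- An admissible measure: a non-negative Borel measure on `ℝ` all of whose absolute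
moments are finite. -/
def IsAdmissible (μ : Measure ℝ) : Prop := ∀ k : ℕ, Integrable (fun x => x ^ k) μ

/-- The `k`-th power moment of a measure. -/
noncomputable def moment (μ : Measure ℝ) (k : ℕ) : ℝ := ∫ x, x ^ k ∂μ

/-- `momentSet K` is the set of moment sequences of admissible measures supported in `K`. -/
def momentSet (K : Set ℝ) : Set (ℕ → ℝ) :=
  {s | ∃ μ : Measure ℝ, IsAdmissible μ ∧ μ Kᶜ = 0 ∧ ∀ k, s k = moment μ k}

/-- An absolutely monotonic entire function: a power series with non-negative
coefficients converging at every real point. -/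
def AbsolutelyMonotonicEntire (G : ℝ → ℝ) : Prop :=
  ∃ c : ℕ → ℝ, (∀ n, 0 ≤ c n) ∧ ∀ x : ℝ, HasSum (fun n => c n * x ^ n) (G x)

/-- `truncMomentSet n K` is the set of truncated moment sequences `(s₀(μ), …, sₙ(μ))`
of admissible measures supported in `K`. -/
def truncMomentSet (n : ℕ) (K : Set ℝ) : Set (Fin (n + 1) → ℝ) :=
  {s | ∃ μ : Measure ℝ, IsAdmissible μ ∧ μ Kᶜ = 0 ∧ ∀ k : Fin (n + 1), s k = moment μ k}

/-!
Applying `F` to the moments `(a + b, -a, a, -a, a)` of `a δ₋₁ + b δ₀` and using that moments on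
`[0, ∞)` are non-negative and log-convex shows that `F` is even, and non-negative and non-decreasing
on `[0, ∞)`. By evenness the moments `±(a + b u₀ ^ k)` of a measure on `{-1, -u₀}` can be replaced
by `a + b u₀ ^ k`, so `b ↦ ∑ k, pₖ F (a + b u₀ ^ k)` is non-negative for every polynomial `p ≥ 0`.
If `F` is smooth, the choice `p = ∏ j < n, (X - u₀ ^ j) ^ 2` (a trick of Loewner) makes
`F⁽ⁿ⁾(a) ≥ 0` the sign of the first non-vanishing derivative of this function at `b = 0`, and
Bernstein's theorem gives the power series. In general, mollify `F` and pass to the limit in the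
power series: monotonicity squeezes `F` between its mollifications.

Conversely, let `F x = G |x|` off the origin and let `μ` be a measure on `[-1, 0]`. If no moment of
`μ` vanishes, `F` acts on them as `G` acts on the moments of the reflection of `μ` to `[0, 1]`, and
powers of moments are moments of multiplicative convolutions. Otherwise `μ = c δ₀`, and the image is
the moment sequence of `F(0) δ₁ + (F(c) - F(0)) δ₀`.
-/

open scoped Topology ContDiff Polynomial

section MomentSet

variable {K L : Set ℝ} {s t : ℕ → ℝ} {μ : Measure ℝ}

lemma IsAdmissible.isFiniteMeasure (hμ : IsAdmissible μ) : IsFiniteMeasure μ :=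
  (integrable_const_iff_isFiniteMeasure one_ne_zero).1 (by simpa only [pow_zero] using hμ 0)

lemma isAdmissible_of_integrable_even_pow (h : ∀ k, Even k → Integrable (fun x => x ^ k) μ) :
    IsAdmissible μ := by
  intro k
  refine ((h 0 .zero).add (h (2 * k) (even_two_mul k))).mono' (by fun_prop) (.of_forall fun x => ?_)
  rw [Real.norm_eq_abs, Pi.add_apply, pow_zero, mul_comm, pow_mul, ← sq_abs (x ^ k)]
  nlinarith [sq_nonneg (|x ^ k| - 1), abs_nonneg (x ^ k)]

lemma momentSet_mono (h : K ⊆ L) : momentSet K ⊆ momentSet L := by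
  rintro s ⟨μ, hμ, hμK, hs⟩
  exact ⟨μ, hμ, measure_mono_null (compl_subset_compl.2 h) hμK, hs⟩

lemma mem_truncMomentSet_iff {n : ℕ} {s : Fin (n + 1) → ℝ} :
    s ∈ truncMomentSet n K ↔ ∃ t ∈ momentSet K, ∀ k : Fin (n + 1), s k = t k := by
  constructor
  · rintro ⟨μ, hμ, hμK, hs⟩
    exact ⟨moment μ, ⟨μ, hμ, hμK, fun _ => rfl⟩, hs⟩
  · rintro ⟨t, ⟨μ, hμ, hμK, ht⟩, hst⟩
    exact ⟨μ, hμ, hμK, fun k => (hst k).trans (ht k)⟩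

lemma mapsTo_truncMomentSet_of_mapsTo_momentSet {F : ℝ → ℝ}
    (h : MapsTo (F ∘ ·) (momentSet K) (momentSet L)) (n : ℕ) :
    MapsTo (F ∘ ·) (truncMomentSet n K) (truncMomentSet n L) := by
  intro s hs
  obtain ⟨t, ht, hst⟩ := mem_truncMomentSet_iff.1 hs
  exact mem_truncMomentSet_iff.2 ⟨F ∘ t, h ht, fun k => congrArg F (hst k)⟩

lemma pow_mem_momentSet {x : ℝ} (hx : x ∈ K) : (fun k => x ^ k) ∈ momentSet K := by
  refine ⟨.dirac x, fun k => integrable_dirac (by simp), ?_, fun k => ?_⟩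
  · simp [hx]
  · rw [moment, integral_dirac]

lemma const_mul_mem_momentSet {c : ℝ} (hc : 0 ≤ c) (hs : s ∈ momentSet K) :
    (fun k => c * s k) ∈ momentSet K := by
  obtain ⟨μ, hμ, hμK, hsμ⟩ := hs
  refine ⟨ENNReal.ofReal c • μ, fun k => (hμ k).smul_measure ENNReal.ofReal_ne_top, ?_, fun k => ?_⟩
  · simp [hμK]
  · rw [moment, integral_smul_measure, ENNReal.toReal_ofReal hc, smul_eq_mul]
    exact congrArg (c * ·) (hsμ k)

lemma mem_momentSet_of_hasSum {ι : Type*} [Countable ι] {t : ι → ℕ → ℝ}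
    (ht : ∀ i, t i ∈ momentSet K) (hs : ∀ k, HasSum (fun i => t i k) (s k)) :
    s ∈ momentSet K := by
  choose μ hμ hμK htμ using ht
  have adm : IsAdmissible (Measure.sum μ) := by
    refine isAdmissible_of_integrable_even_pow fun k hk => ⟨by fun_prop, ?_⟩
    have lintegral_eq (i : ι) : ∫⁻ x, ‖x ^ k‖ₑ ∂μ i = ENNReal.ofReal (t i k) := by
      simp_rw [htμ, moment, Real.enorm_of_nonneg (hk.pow_nonneg _)]
      exact (ofReal_integral_eq_lintegral_ofReal (hμ i k) (.of_forall hk.pow_nonneg)).symm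
    have nonneg (i : ι) : 0 ≤ t i k := htμ i k ▸ integral_nonneg hk.pow_nonneg
    rw [HasFiniteIntegral, lintegral_sum_measure]
    simp_rw [lintegral_eq]
    rw [← ENNReal.ofReal_tsum_of_nonneg nonneg (hs k).summable]
    exact ENNReal.ofReal_lt_top
  refine ⟨.sum μ, adm, Measure.sum_apply_eq_zero.2 hμK, fun k => (hs k).unique ?_⟩
  simp_rw [htμ]
  exact hasSum_integral_measure (adm k)

lemma add_mem_momentSet (hs : s ∈ momentSet K) (ht : t ∈ momentSet K) :
    (fun k => s k + t k) ∈ momentSet K := by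
  refine mem_momentSet_of_hasSum (t := fun i : Bool => cond i s t) (Bool.forall_bool.2 ⟨ht, hs⟩)
    fun k => ?_
  convert hasSum_fintype (fun i : Bool => cond i s t k) using 1
  simp

lemma two_point_mem_momentSet {a b x y : ℝ} (ha : 0 ≤ a) (hb : 0 ≤ b) (hx : x ∈ K) (hy : y ∈ K) :
    (fun k => a * x ^ k + b * y ^ k) ∈ momentSet K :=
  add_mem_momentSet (const_mul_mem_momentSet ha (pow_mem_momentSet hx))
    (const_mul_mem_momentSet hb (pow_mem_momentSet hy))

lemma neg_one_pow_mul_mem_momentSet (hs : s ∈ momentSet K) :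
    (fun k => (-1) ^ k * s k) ∈ momentSet (-K) := by
  obtain ⟨μ, hμ, hμK, hsμ⟩ := hs
  refine ⟨μ.map (MeasurableEquiv.neg ℝ), fun k => ?_, ?_, fun k => ?_⟩
  · refine (integrable_map_equiv _ _).2 (((hμ k).const_mul ((-1) ^ k)).congr ?_)
    exact .of_forall fun x => (neg_pow x k).symm
  · rw [MeasurableEquiv.map_apply]
    convert hμK using 2
    ext x
    simp
  · simp_rw [hsμ, moment, integral_map_equiv, ← integral_const_mul]
    exact integral_congr_ae (.of_forall fun x => (neg_pow x k).symm)

/-- Multiplicative convolution of the representing measures multiplies the moments. -/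
lemma mul_mem_momentSet {P : Set ℝ} (hP : MeasurableSet P) (hKL : ∀ x ∈ K, ∀ y ∈ L, x * y ∈ P)
    (hs : s ∈ momentSet K) (ht : t ∈ momentSet L) : (fun k => s k * t k) ∈ momentSet P := by
  obtain ⟨μ, hμ, hμK, hsμ⟩ := hs
  obtain ⟨ν, hν, hνL, htν⟩ := ht
  have := hμ.isFiniteMeasure
  have := hν.isFiniteMeasure
  have adm : IsAdmissible (μ ∗ₘ ν) := fun k => by
    rw [Measure.mconv, integrable_map_measure (by fun_prop) (by fun_prop)]
    simpa only [Function.comp_def, mul_pow] using (hμ k).mul_prod (hν k)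
  refine ⟨μ ∗ₘ ν, adm, ?_, fun k => ?_⟩
  · rw [Measure.mconv, Measure.map_apply (by fun_prop) hP.compl]
    have fst_mem : ∀ᵐ z ∂μ.prod ν, z.1 ∈ K := Measure.quasiMeasurePreserving_fst.ae hμK
    have snd_mem : ∀ᵐ z ∂μ.prod ν, z.2 ∈ L := Measure.quasiMeasurePreserving_snd.ae hνL
    change ∀ᵐ z ∂μ.prod ν, z.1 * z.2 ∈ P
    filter_upwards [fst_mem, snd_mem] with z h₁ h₂ using hKL _ h₁ _ h₂
  · simp_rw [moment, integral_mconv (adm k), mul_pow, integral_const_mul, integral_mul_const,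
      hsμ, htν, moment]

lemma pow_apply_mem_momentSet {S : Submonoid ℝ} (hS : MeasurableSet (S : Set ℝ))
    (hs : s ∈ momentSet S) (n : ℕ) : (fun k => s k ^ n) ∈ momentSet S := by
  induction n with
  | zero => simpa using pow_mem_momentSet S.one_mem
  | succ n ih =>
    simpa only [pow_succ] using mul_mem_momentSet hS (fun _ hx _ hy => S.mul_mem hx hy) ih hs

lemma AbsolutelyMonotonicEntire.mapsTo_momentSet {G : ℝ → ℝ} (hG : AbsolutelyMonotonicEntire G)
    {S : Submonoid ℝ} (hS : MeasurableSet (S : Set ℝ)) :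
    MapsTo (G ∘ ·) (momentSet S) (momentSet S) := by
  obtain ⟨c, hc, hcG⟩ := hG
  exact fun s hs => mem_momentSet_of_hasSum
    (fun n => const_mul_mem_momentSet (hc n) (pow_apply_mem_momentSet hS hs n)) fun k => hcG (s k)

end MomentSet

section RieszFunctional

variable {K : Set ℝ} {s : ℕ → ℝ}

/-- The Riesz functional of a real sequence: the linear form on polynomials with `X ^ k ↦ s k`. -/
noncomputable def rieszFunctional (s : ℕ → ℝ) : ℝ[X] →ₗ[ℝ] ℝ :=
  Polynomial.lsum fun k => LinearMap.mulRight ℝ (s k)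

lemma rieszFunctional_apply (s : ℕ → ℝ) (p : ℝ[X]) :
    rieszFunctional s p = ∑ k ∈ p.support, p.coeff k * s k := rfl

@[simp]
lemma rieszFunctional_X_pow (s : ℕ → ℝ) (k : ℕ) : rieszFunctional s (Polynomial.X ^ k) = s k := by
  simp [rieszFunctional, Polynomial.lsum_apply, Polynomial.X_pow_eq_monomial]

lemma rieszFunctional_moment {μ : Measure ℝ} (hμ : IsAdmissible μ) (p : ℝ[X]) :
    rieszFunctional (moment μ) p = ∫ x, p.eval x ∂μ := by
  simp_rw [rieszFunctional_apply, moment, ← integral_const_mul, Polynomial.eval_eq_sum,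
    Polynomial.sum_def]
  exact (integral_finsetSum _ fun k _ => (hμ k).const_mul _).symm

lemma rieszFunctional_nonneg (hs : s ∈ momentSet K) {p : ℝ[X]} (hp : ∀ x ∈ K, 0 ≤ p.eval x) :
    0 ≤ rieszFunctional s p := by
  obtain ⟨μ, hμ, hμK, hsμ⟩ := hs
  rw [funext hsμ, rieszFunctional_moment hμ]
  have mem_K : ∀ᵐ x ∂μ, x ∈ K := hμK
  exact integral_nonneg_of_ae (mem_K.mono hp)

lemma nonneg_of_mem_momentSet_Ici (hs : s ∈ momentSet (Ici 0)) (k : ℕ) : 0 ≤ s k := by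
  simpa using rieszFunctional_nonneg hs (p := Polynomial.X ^ k)
    fun x hx => by simpa using pow_nonneg hx k

lemma sq_le_mul_of_mem_momentSet_Ici (hs : s ∈ momentSet (Ici 0)) (k : ℕ) :
    s (k + 1) ^ 2 ≤ s k * s (k + 2) := by
  have quadratic_nonneg (l : ℝ) : 0 ≤ s k * (l * l) + -2 * s (k + 1) * l + s (k + 2) := by
    have expand : Polynomial.X ^ k * (Polynomial.X - Polynomial.C l) ^ 2 =
        (l * l) • (Polynomial.X : ℝ[X]) ^ k + (-2 * l) • Polynomial.X ^ (k + 1) +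
          Polynomial.X ^ (k + 2) := by
      simp only [Polynomial.smul_eq_C_mul, map_mul, map_neg, map_ofNat]
      ring
    have := rieszFunctional_nonneg hs (p := Polynomial.X ^ k * (Polynomial.X - Polynomial.C l) ^ 2)
      fun x hx => by simpa using mul_nonneg (pow_nonneg hx k) (sq_nonneg (x - l))
    simp only [expand, map_add, map_smul, rieszFunctional_X_pow, smul_eq_mul] at this
    linarith
  have := discrim_le_zero quadratic_nonneg
  rw [discrim] at this
  linarith

/-- If a moment vanishes, the representing measure is a multiple of the Dirac mass at the origin. -/
lemma forall_pos_or_forall_succ_eq_zero (hs : s ∈ momentSet (Ici 0)) :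
    (∀ k, 0 < s k) ∨ ∀ k, s (k + 1) = 0 := by
  obtain ⟨μ, hμ, hμK, hsμ⟩ := id hs
  refine or_iff_not_imp_left.2 fun h k => ?_
  obtain ⟨m, hm⟩ := not_forall.1 h
  have nonneg : ∀ᵐ x ∂μ, 0 ≤ x := hμK
  have integral_eq_zero : ∫ x, x ^ m ∂μ = 0 :=
    (hsμ m).symm.trans (le_antisymm (not_lt.1 hm) (nonneg_of_mem_momentSet_Ici hs m))
  rw [integral_eq_zero_iff_of_nonneg_ae (nonneg.mono fun x hx => pow_nonneg hx m) (hμ m)]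
    at integral_eq_zero
  rw [hsμ, moment]
  refine integral_eq_zero_of_ae (integral_eq_zero.mono fun x hx => ?_)
  simp [eq_zero_of_pow_eq_zero hx]

lemma abs_mem_momentSet_neg (hK : K ⊆ Iic 0) (hs : s ∈ momentSet K) :
    (fun k => |s k|) ∈ momentSet (-K) := by
  have signed_mem := neg_one_pow_mul_mem_momentSet hs
  have neg_subset : -K ⊆ Ici 0 := fun x hx => mem_Ici.2 (neg_nonpos.1 (hK hx))
  have nonneg := nonneg_of_mem_momentSet_Ici (momentSet_mono neg_subset signed_mem)
  convert signed_mem using 2 with k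
  rw [← abs_of_nonneg (nonneg k), abs_mul, abs_neg_one_pow, one_mul]

end RieszFunctional

section AbsolutelyMonotonicEntire

variable {G : ℝ → ℝ}

lemma exists_absolutelyMonotonicEntire_of_hasSum {f : ℝ → ℝ} {c : ℕ → ℝ} (hc : ∀ n, 0 ≤ c n)
    (hf : ∀ x, 0 ≤ x → HasSum (fun n => c n * x ^ n) (f x)) :
    ∃ G, AbsolutelyMonotonicEntire G ∧ EqOn f G (Ici 0) := by
  refine ⟨fun x => ∑' n, c n * x ^ n, ⟨c, hc, fun x => Summable.hasSum ?_⟩,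
    fun x hx => (hf x hx).tsum_eq.symm⟩
  refine .of_norm ?_
  simpa [abs_of_nonneg (hc _)] using (hf |x| (abs_nonneg x)).summable

lemma AbsolutelyMonotonicEntire.continuous (hG : AbsolutelyMonotonicEntire G) : Continuous G := by
  obtain ⟨c, hc, hcG⟩ := hG
  obtain rfl : G = fun x => ∑' n, c n * x ^ n := funext fun x => (hcG x).tsum_eq.symm
  have continuousOn_ball (R : ℝ) : ContinuousOn (fun x => ∑' n, c n * x ^ n) (Metric.ball 0 R) := by
    refine continuousOn_tsum (fun n => by fun_prop) (hcG R).summable fun n x hx => ?_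
    rw [norm_mul, norm_pow, Real.norm_of_nonneg (hc n)]
    have := hc n
    gcongr
    exact (mem_ball_zero_iff.1 hx).le
  exact continuous_iff_continuousAt.2 fun x =>
    (continuousOn_ball (‖x‖ + 1)).continuousAt (Metric.isOpen_ball.mem_nhds (by simp))

lemma AbsolutelyMonotonicEntire.monotoneOn (hG : AbsolutelyMonotonicEntire G) :
    MonotoneOn G (Ici 0) := by
  obtain ⟨c, hc, hcG⟩ := hG
  intro x hx y _ hxy
  exact hasSum_le (fun n => mul_le_mul_of_nonneg_left (pow_le_pow_left₀ hx hxy n) (hc n))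
    (hcG x) (hcG y)

/-- Tychonoff extracts a subsequence along which every coefficient converges; the bound at
`2 * |x|` dominates the series at `x` by a geometric one. -/
lemma exists_subseq_tendsto_absolutelyMonotonicEntire {A : ℕ → ℝ → ℝ}
    (hA : ∀ N, AbsolutelyMonotonicEntire (A N))
    (hbdd : ∀ x, 0 ≤ x → BddAbove (range fun N => A N x)) :
    ∃ G, AbsolutelyMonotonicEntire G ∧ ∃ σ : ℕ → ℕ, StrictMono σ ∧
      ∀ x, Tendsto (fun N => A (σ N) x) atTop (𝓝 (G x)) := by
  choose c hc hcA using hA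
  choose! B hB using hbdd
  have coeff_mul_pow_le (N n : ℕ) {R : ℝ} (hR : 0 ≤ R) : c N n * R ^ n ≤ B R :=
    (le_hasSum (hcA N R) n fun j _ => mul_nonneg (hc N j) (pow_nonneg hR j)).trans
      (hB R hR (mem_range_self N))
  have mem_box (N : ℕ) : c N ∈ univ.pi fun _ : ℕ => Icc 0 (B 1) := fun n _ =>
    ⟨hc N n, by simpa using coeff_mul_pow_le N n zero_le_one⟩
  obtain ⟨d, hd, σ, hσ, hlim⟩ := (isCompact_univ_pi fun _ => isCompact_Icc).tendsto_subseq mem_box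
  rw [tendsto_pi_nhds] at hlim
  have term_le_geometric (x : ℝ) (N n : ℕ) : ‖c N n * x ^ n‖ ≤ B (2 * |x|) * (1 / 2) ^ n := by
    calc ‖c N n * x ^ n‖ = c N n * (2 * |x|) ^ n * (1 / 2) ^ n := by
          rw [norm_mul, norm_pow, Real.norm_of_nonneg (hc N n), Real.norm_eq_abs, mul_assoc,
            ← mul_pow]
          ring_nf
      _ ≤ _ := by gcongr; exact coeff_mul_pow_le N n (by positivity)
  have summable_geometric (x : ℝ) : Summable fun n => B (2 * |x|) * (1 / 2 : ℝ) ^ n :=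
    summable_geometric_two.mul_left _
  have term_tendsto (x : ℝ) (n : ℕ) :
      Tendsto (fun N => c (σ N) n * x ^ n) atTop (𝓝 (d n * x ^ n)) := (hlim n).mul_const _
  refine ⟨fun x => ∑' n, d n * x ^ n, ⟨d, fun n => (hd n trivial).1, fun x => ?_⟩, σ, hσ,
    fun x => ?_⟩
  · exact (Summable.of_norm_bounded (summable_geometric x) fun n =>
      le_of_tendsto (term_tendsto x n).norm (.of_forall fun N => term_le_geometric x _ n)).hasSum
  · simp_rw [← (hcA _ x).tsum_eq]
    exact tendsto_tsum_of_dominated_convergence (summable_geometric x) (term_tendsto x)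
      (.of_forall fun N => term_le_geometric x _)

lemma exists_absolutelyMonotonicEntire_of_squeeze {F : ℝ → ℝ} {A : ℕ → ℝ → ℝ} {δ : ℕ → ℝ}
    (hF : Monotone F) (hA : ∀ N, AbsolutelyMonotonicEntire (A N)) (hδ : Tendsto δ atTop (𝓝 0))
    (hle : ∀ N x, 0 ≤ x → F x ≤ A N x) (hge : ∀ N x, 0 ≤ x → A N x ≤ F (x + δ N)) :
    ∃ G, AbsolutelyMonotonicEntire G ∧ EqOn F G (Ioi 0) := by
  obtain ⟨D, hD⟩ := hδ.bddAbove_range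
  obtain ⟨G, hG, σ, hσ, hlim⟩ := exists_subseq_tendsto_absolutelyMonotonicEntire hA fun x hx =>
    ⟨F (x + D), forall_mem_range.2 fun N =>
      (hge N x hx).trans (hF (by linarith [hD (mem_range_self N)]))⟩
  have limit_le {x y : ℝ} (hx : 0 ≤ x) (hxy : x < y) : G x ≤ F y := by
    have eventually_add_lt : ∀ᶠ N in atTop, δ (σ N) < y - x :=
      (hδ.comp hσ.tendsto_atTop).eventually_lt_const (sub_pos.2 hxy)
    refine le_of_tendsto (hlim x) (eventually_add_lt.mono fun N hN => ?_)
    exact (hge (σ N) x hx).trans (hF (by linarith))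
  refine ⟨G, hG, fun x hx => le_antisymm ?_ ?_⟩
  · exact ge_of_tendsto (hlim x) (.of_forall fun N => hle (σ N) x (le_of_lt hx))
  · refine le_of_tendsto (hG.continuous.continuousWithinAt (s := Iio x) (x := x)) ?_
    filter_upwards [Ioo_mem_nhdsLT hx] with y hy using limit_le hy.1.le hy.2

end AbsolutelyMonotonicEntire

section Bernstein

variable {f : ℝ → ℝ} {s : Set ℝ} {x₀ x : ℝ} {n : ℕ}

lemma exists_taylor_lagrange_iteratedDerivWithin (hs : UniqueDiffOn ℝ s) (hf : ContDiffOn ℝ n f s)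
    (hx : x₀ < x) (hsub : Icc x₀ x ⊆ s) :
    ∃ ξ ∈ Icc x₀ x, f x =
      ∑ k ∈ Finset.range n, iteratedDerivWithin k f s x₀ / k.factorial * (x - x₀) ^ k +
        iteratedDerivWithin n f s ξ / n.factorial * (x - x₀) ^ n := by
  cases n with
  | zero => exact ⟨x, right_mem_Icc.2 hx.le, by simp⟩
  | succ n =>
    have unique := uniqueDiffOn_Icc hx
    have restrict {k : ℕ} (hk : k ≤ n + 1) {y : ℝ} (hy : y ∈ Icc x₀ x) :
        iteratedDerivWithin k f (Icc x₀ x) y = iteratedDerivWithin k f s y := by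
      rw [iteratedDerivWithin_eq_iteratedFDerivWithin, iteratedDerivWithin_eq_iteratedFDerivWithin,
        iteratedFDerivWithin_subset hsub unique hs (hf.of_le (mod_cast hk)) hy]
    have contDiffOn_Icc := hf.mono hsub
    obtain ⟨ξ, hξ, remainder⟩ := taylor_mean_remainder_lagrange (f := f) (n := n) hx.ne
      (by rw [uIcc_of_lt hx]; exact contDiffOn_Icc.of_le (mod_cast n.le_succ))
      (by
        rw [uIcc_of_lt hx, uIoo_of_lt hx]
        exact (contDiffOn_Icc.differentiableOn_iteratedDerivWithin (mod_cast n.lt_succ_self)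
          unique).mono Ioo_subset_Icc_self)
    rw [uIoo_of_lt hx] at hξ
    refine ⟨ξ, Ioo_subset_Icc_self hξ, ?_⟩
    rw [uIcc_of_lt hx, taylor_within_apply, restrict le_rfl (Ioo_subset_Icc_self hξ)] at remainder
    rw [Finset.sum_congr rfl fun k hk => by
      rw [restrict (Finset.mem_range.1 hk).le (left_mem_Icc.2 hx.le), smul_eq_mul, mul_right_comm,
        ← div_eq_inv_mul]] at remainder
    linear_combination remainder

lemma monotoneOn_iteratedDerivWithin (hf : AbsolutelyMonotoneOn f s) (hs : UniqueDiffOn ℝ s)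
    (hconv : Convex ℝ s) (n : ℕ) : MonotoneOn (iteratedDerivWithin n f s) s := by
  have differentiableOn := hf.contDiffOn.differentiableOn_iteratedDerivWithin (m := n)
    (mod_cast WithTop.coe_lt_top n) hs
  refine monotoneOn_of_deriv_nonneg hconv differentiableOn.continuousOn
    (differentiableOn.mono interior_subset) fun x hx => ?_
  rw [← derivWithin_of_mem_nhds (mem_interior_iff_mem_nhds.1 hx), ← iteratedDerivWithin_succ]
  exact hf.iteratedDerivWithin_nonneg hs (n + 1) (interior_subset hx)

lemma iteratedDerivWithin_div_factorial_mul_pow_le (hf : AbsolutelyMonotoneOn f s)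
    (hs : UniqueDiffOn ℝ s) (hconv : Convex ℝ s) (n : ℕ) (hx₀ : x₀ ∈ s) (hx : x ∈ s)
    (hlt : x₀ < x) : iteratedDerivWithin n f s x₀ / n.factorial * (x - x₀) ^ n ≤ f x := by
  have hsub : Icc x₀ x ⊆ s := hconv.ordConnected.out hx₀ hx
  obtain ⟨ξ, hξ, taylor⟩ := exists_taylor_lagrange_iteratedDerivWithin (n := n) hs
    (hf.contDiffOn.of_le (mod_cast le_top)) hlt hsub
  have : 0 ≤ x - x₀ := sub_nonneg.2 hlt.le
  have sum_nonneg : 0 ≤ ∑ k ∈ Finset.range n,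
      iteratedDerivWithin k f s x₀ / k.factorial * (x - x₀) ^ k :=
    Finset.sum_nonneg fun k _ => by
      have := hf.iteratedDerivWithin_nonneg hs k hx₀
      positivity
  have remainder_ge : iteratedDerivWithin n f s x₀ / n.factorial * (x - x₀) ^ n ≤
      iteratedDerivWithin n f s ξ / n.factorial * (x - x₀) ^ n := by
    gcongr
    exact monotoneOn_iteratedDerivWithin hf hs hconv n hx₀ (hsub hξ) hξ.1
  linarith

lemma abs_sum_iteratedDerivWithin_sub_le (hf : AbsolutelyMonotoneOn f (Ici 0)) (hx : 0 < x)
    (n : ℕ) :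
    |∑ k ∈ Finset.range n, iteratedDerivWithin k f (Ici 0) 0 / k.factorial * x ^ k - f x| ≤
      f (3 * x) * (1 / 2) ^ n := by
  have unique := uniqueDiffOn_Ici (0 : ℝ)
  obtain ⟨ξ, hξ, taylor⟩ := exists_taylor_lagrange_iteratedDerivWithin (n := n) unique
    (hf.contDiffOn.of_le (mod_cast le_top)) hx Icc_subset_Ici_self
  have derivative_nonneg := hf.iteratedDerivWithin_nonneg unique n (Icc_subset_Ici_self hξ)
  rw [sub_zero] at taylor
  rw [taylor, sub_add_cancel_left, abs_neg, abs_of_nonneg (by positivity)]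
  calc iteratedDerivWithin n f (Ici 0) ξ / n.factorial * x ^ n
      ≤ iteratedDerivWithin n f (Ici 0) x / n.factorial * x ^ n := by
        gcongr
        exact monotoneOn_iteratedDerivWithin hf unique (convex_Ici 0) n
          (Icc_subset_Ici_self hξ) hx.le hξ.2
    _ = iteratedDerivWithin n f (Ici 0) x / n.factorial * (3 * x - x) ^ n * (1 / 2) ^ n := by
        rw [mul_assoc, ← mul_pow]
        ring_nf
    _ ≤ f (3 * x) * (1 / 2) ^ n := by
        gcongr
        exact iteratedDerivWithin_div_factorial_mul_pow_le hf unique (convex_Ici 0) n hx.le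
          (mem_Ici.2 (by positivity)) (by linarith)

lemma exists_absolutelyMonotonicEntire_of_absolutelyMonotoneOn
    (hf : AbsolutelyMonotoneOn f (Ici 0)) :
    ∃ G, AbsolutelyMonotonicEntire G ∧ EqOn f G (Ici 0) := by
  have coeff_nonneg (n : ℕ) : 0 ≤ iteratedDerivWithin n f (Ici 0) 0 / n.factorial :=
    div_nonneg (hf.iteratedDerivWithin_nonneg (uniqueDiffOn_Ici 0) n self_mem_Ici)
      (Nat.cast_nonneg _)
  refine exists_absolutelyMonotonicEntire_of_hasSum coeff_nonneg fun x hx => ?_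
  rcases hx.eq_or_lt with rfl | hx
  · convert hasSum_single (f := fun n => iteratedDerivWithin n f (Ici 0) 0 / n.factorial * 0 ^ n)
      0 fun n hn => by simp [hn] using 1
    simp
  rw [hasSum_iff_tendsto_nat_of_nonneg fun n => mul_nonneg (coeff_nonneg n) (pow_nonneg hx.le n),
    tendsto_iff_norm_sub_tendsto_zero]
  have bound_tendsto : Tendsto (fun n : ℕ => f (3 * x) * (1 / 2 : ℝ) ^ n) atTop (𝓝 0) := by
    simpa using (tendsto_pow_atTop_nhds_zero_of_lt_one (r := (1 / 2 : ℝ)) (by norm_num)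
      (by norm_num)).const_mul (f (3 * x))
  exact squeeze_zero (fun _ => norm_nonneg _) (abs_sum_iteratedDerivWithin_sub_le hf hx)
    bound_tendsto

end Bernstein

section Loewner

lemma iteratedDeriv_nonneg_of_eventually_nonneg {f : ℝ → ℝ} {x₀ : ℝ} {n : ℕ}
    (hf : ContDiff ℝ n f) (hzero : ∀ m < n, iteratedDeriv m f x₀ = 0)
    (hnonneg : ∀ᶠ x in 𝓝[>] x₀, 0 ≤ f x) : 0 ≤ iteratedDeriv n f x₀ := by
  have taylor_eq (x : ℝ) : taylorWithinEval f n univ x₀ x =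
      iteratedDeriv n f x₀ / n.factorial * (x - x₀) ^ n := by
    simp_rw [taylor_within_apply, iteratedDerivWithin_univ, Finset.sum_range_succ, smul_eq_mul]
    rw [Finset.sum_eq_zero fun m hm => by rw [hzero m (Finset.mem_range.1 hm), mul_zero]]
    ring
  have error_tendsto := (Real.taylor_tendsto convex_univ (mem_univ x₀) hf.contDiffOn).mono_left
    (nhdsWithin_mono x₀ (subset_univ (Ioi x₀)))
  have quotient_tendsto : Tendsto (fun x => f x / (x - x₀) ^ n) (𝓝[>] x₀)
      (𝓝 (iteratedDeriv n f x₀ / n.factorial)) := by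
    refine (zero_add (iteratedDeriv n f x₀ / n.factorial) ▸ error_tendsto.add_const _).congr' ?_
    filter_upwards [self_mem_nhdsWithin] with x hx
    have : x - x₀ ≠ 0 := (sub_pos.2 hx).ne'
    rw [taylor_eq]
    field_simp
    ring
  have quotient_nonneg : ∀ᶠ x in 𝓝[>] x₀, 0 ≤ f x / (x - x₀) ^ n := by
    filter_upwards [hnonneg, self_mem_nhdsWithin] with x hfx hx
    exact div_nonneg hfx (pow_nonneg (sub_nonneg.2 (le_of_lt hx)) n)
  have coeff_nonneg := ge_of_tendsto quotient_tendsto quotient_nonneg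
  have factorial_pos : (0 : ℝ) < n.factorial := mod_cast n.factorial_pos
  simpa using (le_div_iff₀ factorial_pos).1 coeff_nonneg

/-- `F` maps the moment sequence `a + b * u ^ k` of every non-negative measure on `{1, u}` to a
sequence whose Riesz functional is non-negative on the polynomials that are non-negative on `ℝ`.
Asking for this positivity instead of a representing measure makes the condition visibly stable
under averages of translates. -/
def IsTwoPointPositive (u : ℝ) (F : ℝ → ℝ) : Prop :=
  ∀ a b : ℝ, 0 ≤ a → 0 ≤ b → ∀ p : ℝ[X], (∀ x, 0 ≤ p.eval x) →
    0 ≤ rieszFunctional (fun k => F (a + b * u ^ k)) p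

variable {u : ℝ} {F : ℝ → ℝ}

lemma contDiff_rieszFunctional_two_point {n : WithTop ℕ∞} (hF : ContDiff ℝ n F) (u a : ℝ)
    (p : ℝ[X]) : ContDiff ℝ n fun b => rieszFunctional (fun k => F (a + b * u ^ k)) p := by
  simp_rw [rieszFunctional_apply]
  fun_prop

lemma iteratedDeriv_rieszFunctional_two_point {m : ℕ} (hF : ContDiff ℝ m F) (u a : ℝ) (p : ℝ[X]) :
    iteratedDeriv m (fun b => rieszFunctional (fun k => F (a + b * u ^ k)) p) 0 =
      p.eval (u ^ m) * iteratedDeriv m F a := by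
  have iteratedDeriv_term (k : ℕ) :
      iteratedDeriv m (fun b => F (a + b * u ^ k)) 0 = (u ^ k) ^ m * iteratedDeriv m F a := by
    simp_rw [mul_comm _ (u ^ k)]
    rw [iteratedDeriv_comp_const_mul (f := fun z => F (a + z)) (by fun_prop),
      iteratedDeriv_comp_const_add]
    simp
  simp_rw [rieszFunctional_apply]
  rw [iteratedDeriv_fun_sum fun k _ => by fun_prop, Polynomial.eval_eq_sum, Polynomial.sum_def,
    Finset.sum_mul]
  refine Finset.sum_congr rfl fun k _ => ?_
  rw [iteratedDeriv_const_mul_field, iteratedDeriv_term, pow_right_comm, mul_assoc]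

lemma IsTwoPointPositive.absolutelyMonotoneOn (hF : IsTwoPointPositive u F)
    (hsmooth : ContDiff ℝ ∞ F) (hu : Function.Injective fun k : ℕ => u ^ k) :
    AbsolutelyMonotoneOn F (Ici 0) := by
  refine .of_contDiff hsmooth fun n a ha => ?_
  -- `p` kills the derivatives of order below `n` at `b = 0`, so the `n`-th one inherits the sign
  -- of the function.
  let p : ℝ[X] := ∏ j ∈ Finset.range n, (Polynomial.X - Polynomial.C (u ^ j)) ^ 2
  have eval_p (x : ℝ) : p.eval x = ∏ j ∈ Finset.range n, (x - u ^ j) ^ 2 := by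
    simp [p, Polynomial.eval_prod]
  have smooth (m : ℕ) : ContDiff ℝ m F := hsmooth.of_le (mod_cast le_top)
  have iteratedDeriv_nonneg : 0 ≤
      iteratedDeriv n (fun b => rieszFunctional (fun k => F (a + b * u ^ k)) p) 0 := by
    refine iteratedDeriv_nonneg_of_eventually_nonneg
      (contDiff_rieszFunctional_two_point (smooth n) u a p) (fun m hm => ?_) ?_
    · rw [iteratedDeriv_rieszFunctional_two_point (smooth m), eval_p,
        Finset.prod_eq_zero (Finset.mem_range.2 hm) (by simp), zero_mul]
    · filter_upwards [self_mem_nhdsWithin] with b hb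
      exact hF a b ha (le_of_lt hb) p fun x => by rw [eval_p]; positivity
  rw [iteratedDeriv_rieszFunctional_two_point (smooth n)] at iteratedDeriv_nonneg
  refine nonneg_of_mul_nonneg_right iteratedDeriv_nonneg ?_
  rw [eval_p]
  refine Finset.prod_pos fun j hj => sq_pos_of_ne_zero (sub_ne_zero.2 ?_)
  exact hu.ne (Finset.mem_range.1 hj).ne'

end Loewner

section Mollification

variable {u : ℝ} {F : ℝ → ℝ} {φ : ContDiffBump (0 : ℝ)}

/-- The mean of the values `F (x + φ.rOut - t)`, weighted by the normalized bump function `φ` at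
`t`. The shift by `φ.rOut` keeps the arguments to the right of `x`, which preserves conditions on
`F` over the half-line `[0, ∞)`. -/
noncomputable def shiftedMollification (φ : ContDiffBump (0 : ℝ)) (F : ℝ → ℝ) (x : ℝ) : ℝ :=
  ∫ t, φ.normed volume t * F (x + φ.rOut - t)

lemma integrable_normed_mul_comp_sub (φ : ContDiffBump (0 : ℝ)) (hF : LocallyIntegrable F)
    (x : ℝ) : Integrable fun t => φ.normed volume t * F (x - t) :=
  (φ.hasCompactSupport_normed (μ := volume)).convolutionExists_left
    (ContinuousLinearMap.lsmul ℝ ℝ) φ.continuous_normed hF x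

lemma abs_lt_rOut_of_normed_ne_zero {t : ℝ} (ht : φ.normed volume t ≠ 0) : |t| < φ.rOut := by
  have : t ∈ Function.support (φ.normed volume) := ht
  rwa [φ.support_normed_eq, mem_ball_zero_iff] at this

lemma contDiff_shiftedMollification (φ : ContDiffBump (0 : ℝ)) (hF : LocallyIntegrable F) :
    ContDiff ℝ ∞ (shiftedMollification φ F) :=
  ((φ.hasCompactSupport_normed (μ := volume)).contDiff_convolution_left
    (ContinuousLinearMap.lsmul ℝ ℝ) φ.contDiff_normed hF).comp (contDiff_id.add contDiff_const)

lemma integral_normed_mul_const (φ : ContDiffBump (0 : ℝ)) (c : ℝ) :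
    ∫ t, φ.normed volume t * c = c := by
  rw [integral_mul_const, φ.integral_normed, one_mul]

lemma le_shiftedMollification (φ : ContDiffBump (0 : ℝ)) (hF : Monotone F) (x : ℝ) :
    F x ≤ shiftedMollification φ F x := by
  rw [← integral_normed_mul_const φ (F x)]
  refine integral_mono (φ.integrable_normed.mul_const _)
    (integrable_normed_mul_comp_sub φ hF.locallyIntegrable _) fun t => ?_
  by_cases ht : φ.normed volume t = 0
  · simp [ht]
  · have := abs_lt.1 (abs_lt_rOut_of_normed_ne_zero ht)
    exact mul_le_mul_of_nonneg_left (hF (by linarith)) (φ.nonneg_normed t)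

lemma shiftedMollification_le (φ : ContDiffBump (0 : ℝ)) (hF : Monotone F) (x : ℝ) :
    shiftedMollification φ F x ≤ F (x + 2 * φ.rOut) := by
  rw [← integral_normed_mul_const φ (F (x + 2 * φ.rOut))]
  refine integral_mono (integrable_normed_mul_comp_sub φ hF.locallyIntegrable _)
    (φ.integrable_normed.mul_const _) fun t => ?_
  by_cases ht : φ.normed volume t = 0
  · simp [ht]
  · have := abs_lt.1 (abs_lt_rOut_of_normed_ne_zero ht)
    exact mul_le_mul_of_nonneg_left (hF (by linarith)) (φ.nonneg_normed t)

lemma isTwoPointPositive_shiftedMollification (φ : ContDiffBump (0 : ℝ))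
    (hF : IsTwoPointPositive u F) (hint : LocallyIntegrable F) :
    IsTwoPointPositive u (shiftedMollification φ F) := by
  intro a b ha hb p hp
  have riesz_eq_integral :
      rieszFunctional (fun k => shiftedMollification φ F (a + b * u ^ k)) p =
        ∫ t, φ.normed volume t *
          rieszFunctional (fun k => F (a + φ.rOut - t + b * u ^ k)) p := by
    simp_rw [rieszFunctional_apply, shiftedMollification, ← integral_const_mul]
    rw [← integral_finsetSum _ fun k _ =>
      (integrable_normed_mul_comp_sub φ hint _).const_mul _]
    simp_rw [Finset.mul_sum, mul_left_comm]
    ring_nf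
  rw [riesz_eq_integral]
  refine integral_nonneg fun t => ?_
  by_cases ht : φ.normed volume t = 0
  · simp [ht]
  · have := abs_lt.1 (abs_lt_rOut_of_normed_ne_zero ht)
    exact mul_nonneg (φ.nonneg_normed t) (hF _ b (by linarith) hb p hp)

theorem IsTwoPointPositive.exists_absolutelyMonotonicEntire (hF : IsTwoPointPositive u F)
    (hmono : Monotone F) (hu : Function.Injective fun k : ℕ => u ^ k) :
    ∃ G, AbsolutelyMonotonicEntire G ∧ EqOn F G (Ioi 0) := by
  let φ (N : ℕ) : ContDiffBump (0 : ℝ) :=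
    ⟨1 / (N + 1) / 2, 1 / (N + 1), by positivity, half_lt_self (by positivity)⟩
  have absolutelyMonotoneOn (N : ℕ) :
      AbsolutelyMonotoneOn (shiftedMollification (φ N) F) (Ici 0) :=
    (isTwoPointPositive_shiftedMollification (φ N) hF hmono.locallyIntegrable).absolutelyMonotoneOn
      (contDiff_shiftedMollification (φ N) hmono.locallyIntegrable) hu
  choose A hA hA_eq using fun N =>
    exists_absolutelyMonotonicEntire_of_absolutelyMonotoneOn (absolutelyMonotoneOn N)
  have width_tendsto : Tendsto (fun N => 2 * (φ N).rOut) atTop (𝓝 0) := by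
    simpa [φ] using tendsto_one_div_add_atTop_nhds_zero_nat.const_mul (2 : ℝ)
  exact exists_absolutelyMonotonicEntire_of_squeeze hmono hA width_tendsto
    (fun N x hx => hA_eq N hx ▸ le_shiftedMollification (φ N) hmono x)
    (fun N x hx => hA_eq N hx ▸ shiftedMollification_le (φ N) hmono x)

end Mollification

section FourMoments

variable {F : ℝ → ℝ}

lemma exists_mem_momentSet_Ici_of_mapsTo_truncMomentSet
    (h : MapsTo (F ∘ ·) (truncMomentSet 4 {-1, 0}) (truncMomentSet 4 (Ici 0))) {a b : ℝ}
    (ha : 0 ≤ a) (hb : 0 ≤ b) :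
    ∃ s ∈ momentSet (Ici 0),
      s 0 = F (a + b) ∧ s 1 = F (-a) ∧ s 2 = F a ∧ s 3 = F (-a) ∧ s 4 = F a := by
  have two_point_mem : (fun k : Fin 5 => a * (-1) ^ (k : ℕ) + b * 0 ^ (k : ℕ)) ∈
      truncMomentSet 4 {-1, 0} :=
    mem_truncMomentSet_iff.2
      ⟨_, two_point_mem_momentSet ha hb (mem_insert _ _) (mem_insert_of_mem _ rfl), fun _ => rfl⟩
  obtain ⟨s, hs, hFs⟩ := mem_truncMomentSet_iff.1 (h two_point_mem)
  refine ⟨s, hs, ?_, ?_, ?_, ?_, ?_⟩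
  · simpa using (hFs 0).symm
  · simpa using (hFs 1).symm
  · simpa using (hFs 2).symm
  · simpa [Odd.neg_one_pow (by decide : Odd 3)] using (hFs 3).symm
  · simpa [Even.neg_one_pow (by decide : Even 4)] using (hFs 4).symm

lemma nonneg_of_mapsTo_truncMomentSet
    (h : MapsTo (F ∘ ·) (truncMomentSet 4 {-1, 0}) (truncMomentSet 4 (Ici 0))) {a : ℝ}
    (ha : 0 ≤ a) : 0 ≤ F a := by
  obtain ⟨s, hs, -, -, s_two, -⟩ := exists_mem_momentSet_Ici_of_mapsTo_truncMomentSet h ha le_rfl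
  exact s_two ▸ nonneg_of_mem_momentSet_Ici hs 2

lemma even_of_mapsTo_truncMomentSet
    (h : MapsTo (F ∘ ·) (truncMomentSet 4 {-1, 0}) (truncMomentSet 4 (Ici 0))) :
    Function.Even F := by
  have apply_neg {a : ℝ} (ha : 0 ≤ a) : F (-a) = F a := by
    obtain ⟨s, hs, -, s_one, s_two, s_three, s_four⟩ :=
      exists_mem_momentSet_Ici_of_mapsTo_truncMomentSet h ha le_rfl
    have neg_nonneg : 0 ≤ F (-a) := s_one ▸ nonneg_of_mem_momentSet_Ici hs 1
    have nonneg : 0 ≤ F a := s_two ▸ nonneg_of_mem_momentSet_Ici hs 2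
    have sq_le : F a ^ 2 ≤ F (-a) ^ 2 := by
      simpa only [s_one, s_two, s_three, ← sq] using sq_le_mul_of_mem_momentSet_Ici hs 1
    have sq_ge : F (-a) ^ 2 ≤ F a ^ 2 := by
      simpa only [s_two, s_three, s_four, ← sq] using sq_le_mul_of_mem_momentSet_Ici hs 2
    exact (sq_eq_sq₀ neg_nonneg nonneg).1 (le_antisymm sq_ge sq_le)
  intro x
  rcases le_total 0 x with hx | hx
  · exact apply_neg hx
  · simpa using (apply_neg (neg_nonneg.2 hx)).symm

lemma monotoneOn_of_mapsTo_truncMomentSet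
    (h : MapsTo (F ∘ ·) (truncMomentSet 4 {-1, 0}) (truncMomentSet 4 (Ici 0))) :
    MonotoneOn F (Ici 0) := by
  intro x hx y hy hxy
  obtain ⟨s, hs, s_zero, s_one, s_two, -⟩ :=
    exists_mem_momentSet_Ici_of_mapsTo_truncMomentSet h hx (sub_nonneg.2 hxy)
  have sq_le : F x ^ 2 ≤ F y * F x := by
    simpa only [s_zero, s_one, s_two, even_of_mapsTo_truncMomentSet h x, add_sub_cancel]
      using sq_le_mul_of_mem_momentSet_Ici hs 0
  rcases (nonneg_of_mapsTo_truncMomentSet h hx).eq_or_lt with hzero | hpos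
  · exact hzero ▸ nonneg_of_mapsTo_truncMomentSet h hy
  · exact le_of_mul_le_mul_right (sq (F x) ▸ sq_le) hpos

end FourMoments

section EvenExtension

variable {F G : ℝ → ℝ}

/-- `F` agrees off the origin with the even function `x ↦ G |x|`, and its value at the origin lies
in the interval `[0, G 0]`. -/
structure IsEvenExtension (F G : ℝ → ℝ) : Prop where
  eq_apply_abs : ∀ x ≠ 0, F x = G |x|
  zero_nonneg : 0 ≤ F 0
  zero_le : F 0 ≤ G 0

lemma tendsto_nhdsNE_zero_of_eq_apply_abs (hG : Continuous G) (h : ∀ x ≠ 0, F x = G |x|) :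
    Tendsto F (𝓝[≠] 0) (𝓝 (G 0)) := by
  have tendsto_abs : Tendsto (fun x => G |x|) (𝓝[≠] 0) (𝓝 (G |0|)) :=
    ((hG.comp continuous_abs).tendsto 0).mono_left nhdsWithin_le_nhds
  rw [abs_zero] at tendsto_abs
  exact tendsto_abs.congr' (eventually_nhdsWithin_of_forall fun x hx => (h x hx).symm)

lemma isEvenExtension_iff (hG : Continuous G) :
    IsEvenExtension F G ↔ (∀ x > 0, F x = G x) ∧ (∀ x < 0, F x = G (-x)) ∧ 0 ≤ F 0 ∧
      ∃ L, Tendsto F (𝓝[≠] 0) (𝓝 L) ∧ F 0 ≤ L := by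
  constructor
  · rintro ⟨eq_apply_abs, zero_nonneg, zero_le⟩
    exact ⟨fun x hx => by rw [eq_apply_abs x hx.ne', abs_of_pos hx],
      fun x hx => by rw [eq_apply_abs x hx.ne, abs_of_neg hx], zero_nonneg, G 0,
      tendsto_nhdsNE_zero_of_eq_apply_abs hG eq_apply_abs, zero_le⟩
  · rintro ⟨eq_of_pos, eq_of_neg, zero_nonneg, L, hL, zero_le⟩
    have eq_apply_abs (x : ℝ) (hx : x ≠ 0) : F x = G |x| := by
      rcases hx.lt_or_gt with hx | hx
      · rw [abs_of_neg hx, eq_of_neg x hx]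
      · rw [abs_of_pos hx, eq_of_pos x hx]
    have limit_eq := tendsto_nhds_unique hL (tendsto_nhdsNE_zero_of_eq_apply_abs hG eq_apply_abs)
    exact ⟨eq_apply_abs, zero_nonneg, limit_eq ▸ zero_le⟩

lemma IsEvenExtension.zero_le_apply (h : IsEvenExtension F G) (hG : MonotoneOn G (Ici 0)) (x : ℝ) :
    F 0 ≤ F x := by
  rcases eq_or_ne x 0 with rfl | hx
  · rfl
  · calc F 0 ≤ G 0 := h.zero_le
      _ ≤ G |x| := hG self_mem_Ici (abs_nonneg x) (abs_nonneg x)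
      _ = F x := (h.eq_apply_abs x hx).symm

lemma IsEvenExtension.mapsTo_momentSet (h : IsEvenExtension F G)
    (hG : AbsolutelyMonotonicEntire G) :
    MapsTo (F ∘ ·) (momentSet (Icc (-1) 0)) (momentSet (Icc 0 1)) := by
  intro s hs
  have abs_mem : (fun k => |s k|) ∈ momentSet (Icc 0 1) := by
    simpa using abs_mem_momentSet_neg Icc_subset_Iic_self hs
  rcases forall_pos_or_forall_succ_eq_zero (momentSet_mono Icc_subset_Ici_self abs_mem) with
    pos | abs_succ_eq_zero
  · have comp_eq : F ∘ s = G ∘ fun k => |s k| :=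
      funext fun k => h.eq_apply_abs _ (abs_pos.1 (pos k))
    exact mem_of_eq_of_mem comp_eq
      (hG.mapsTo_momentSet (S := unitInterval.submonoid) measurableSet_Icc abs_mem)
  · have comp_eq : F ∘ s = fun k => F 0 * 1 ^ k + (F (s 0) - F 0) * 0 ^ k := by
      funext k
      cases k with
      | zero => simp
      | succ k => simp [abs_eq_zero.1 (abs_succ_eq_zero k)]
    exact mem_of_eq_of_mem comp_eq (two_point_mem_momentSet h.zero_nonneg
      (sub_nonneg.2 (h.zero_le_apply hG.monotoneOn _)) (right_mem_Icc.2 zero_le_one)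
      (left_mem_Icc.2 zero_le_one))

lemma isTwoPointPositive_comp_max_zero {u : ℝ} (hu : 0 ≤ u) (hF : Function.Even F)
    (h : MapsTo (F ∘ ·) (momentSet {-1, -u}) (momentSet univ)) :
    IsTwoPointPositive u fun x => F (max x 0) := by
  intro a b ha hb p hp
  have comp_eq : (fun k => F (max (a + b * u ^ k) 0)) =
      F ∘ fun k => a * (-1) ^ k + b * (-u) ^ k := by
    funext k
    rw [max_eq_left (by positivity), Function.comp_apply, neg_pow u]
    rcases neg_one_pow_eq_or ℝ k with sign | sign <;> rw [sign]
    · ring_nf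
    · rw [← hF]
      ring_nf
  rw [comp_eq]
  exact rieszFunctional_nonneg (h (two_point_mem_momentSet ha hb (mem_insert _ _)
    (mem_insert_of_mem _ rfl))) fun x _ => hp x

theorem exists_isEvenExtension_of_mapsTo {u : ℝ} (hu : 0 ≤ u)
    (hinj : Function.Injective fun k : ℕ => u ^ k)
    (h₁ : MapsTo (F ∘ ·) (momentSet {-1, -u}) (momentSet univ))
    (h₂ : MapsTo (F ∘ ·) (truncMomentSet 4 {-1, 0}) (truncMomentSet 4 (Ici 0))) :
    ∃ G, AbsolutelyMonotonicEntire G ∧ IsEvenExtension F G := by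
  have even := even_of_mapsTo_truncMomentSet h₂
  have monotoneOn := monotoneOn_of_mapsTo_truncMomentSet h₂
  have monotone_comp_max : Monotone fun x => F (max x 0) := fun x y hxy =>
    monotoneOn (le_max_right x 0) (le_max_right y 0) (max_le_max_right 0 hxy)
  obtain ⟨G, hG, comp_max_eq⟩ := (isTwoPointPositive_comp_max_zero hu even
    h₁).exists_absolutelyMonotonicEntire monotone_comp_max hinj
  have eq_of_pos (x : ℝ) (hx : 0 < x) : F x = G x := by
    simpa only [max_eq_left hx.le] using comp_max_eq hx
  refine ⟨G, hG, fun x hx => ?_, nonneg_of_mapsTo_truncMomentSet h₂ le_rfl, ?_⟩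
  · rw [← eq_of_pos |x| (abs_pos.2 hx)]
    rcases abs_choice x with hx | hx <;> rw [hx]
    exact (even x).symm
  · refine ge_of_tendsto (hG.continuous.continuousWithinAt (s := Ioi 0) (x := 0)) ?_
    filter_upwards [self_mem_nhdsWithin] with x hx
    exact eq_of_pos x hx ▸ monotoneOn self_mem_Ici (mem_Ici_of_Ioi hx) (le_of_lt hx)

end EvenExtension

theorem moment_transform_Icc_neg_one_zero_even_TFAE_general (u₀ : ℝ) (hu₀ : u₀ ∈ Ioo 0 1)
    (F : ℝ → ℝ) :
    List.TFAE
      [MapsTo (F ∘ ·) (momentSet {-1, -u₀}) (momentSet univ) ∧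
        MapsTo (F ∘ ·) (truncMomentSet 4 {-1, 0}) (truncMomentSet 4 (Ici 0)),
        MapsTo (F ∘ ·) (momentSet {-1, -u₀}) (momentSet (Ici 0)) ∧
        MapsTo (F ∘ ·) (truncMomentSet 4 {-1, 0}) (truncMomentSet 4 (Ici 0)) ∧
        ∀ u ∈ Ioo 0 1, MapsTo (F ∘ ·) (truncMomentSet 4 {-u}) (truncMomentSet 4 (Ici 0)),
        MapsTo (F ∘ ·) (momentSet (Icc (-1) 0)) (momentSet (Icc 0 1)),
        ∃ G, AbsolutelyMonotonicEntire G ∧ (∀ x > 0, F x = G x) ∧ (∀ x < 0, F x = G (-x)) ∧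
          0 ≤ F 0 ∧ ∃ L, Tendsto F (𝓝[≠] 0) (𝓝 L) ∧ F 0 ≤ L] := by
  have neg_mem {u : ℝ} (hu : u ∈ Ioo 0 1) : -u ∈ Icc (-1) 0 :=
    ⟨neg_le_neg hu.2.le, neg_nonpos.2 hu.1.le⟩
  tfae_have 2 → 1 := fun ⟨h₁, h₂, _⟩ => ⟨h₁.mono_right (momentSet_mono (subset_univ _)), h₂⟩
  tfae_have 1 → 4 := by
    rintro ⟨h₁, h₂⟩
    obtain ⟨G, hG, h⟩ := exists_isEvenExtension_of_mapsTo hu₀.1.le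
      (pow_right_injective₀ hu₀.1 hu₀.2.ne) h₁ h₂
    exact ⟨G, hG, (isEvenExtension_iff hG.continuous).1 h⟩
  tfae_have 4 → 3 := fun ⟨G, hG, h⟩ =>
    ((isEvenExtension_iff hG.continuous).2 h).mapsTo_momentSet hG
  tfae_have 3 → 2 := by
    intro h
    have mapsTo_Ici {K : Set ℝ} (hK : K ⊆ Icc (-1) 0) :
        MapsTo (F ∘ ·) (momentSet K) (momentSet (Ici 0)) :=
      h.mono (momentSet_mono hK) (momentSet_mono Icc_subset_Ici_self)
    exact ⟨mapsTo_Ici (pair_subset (left_mem_Icc.2 (by norm_num)) (neg_mem hu₀)),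
      mapsTo_truncMomentSet_of_mapsTo_momentSet
        (mapsTo_Ici (pair_subset (left_mem_Icc.2 (by norm_num)) (right_mem_Icc.2 (by norm_num)))) 4,
      fun u hu => mapsTo_truncMomentSet_of_mapsTo_momentSet
        (mapsTo_Ici (singleton_subset_iff.2 (neg_mem hu))) 4⟩
  tfae_finish

/-- Classification of the entrywise transformers sending `M([-1,0])` to `M([0,1])`
(even case). -/
theorem moment_transform_Icc_neg_one_zero_even_TFAE (u₀ : ℝ) (hu₀ : u₀ ∈ Set.Ioo (0 : ℝ) 1)
    (F : ℝ → ℝ) :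
    List.TFAE
      [(∀ s ∈ momentSet ({-1, -u₀} : Set ℝ),
          (fun k => F (s k)) ∈ momentSet (Set.Ici (0 : ℝ))) ∧
        (∀ s ∈ truncMomentSet 4 ({-1, 0} : Set ℝ),
          (fun k => F (s k)) ∈ truncMomentSet 4 (Set.Ici (0 : ℝ))) ∧
        (∀ u ∈ Set.Ioo (0 : ℝ) 1, ∀ s ∈ truncMomentSet 4 ({-u} : Set ℝ),
          (fun k => F (s k)) ∈ truncMomentSet 4 (Set.Ici (0 : ℝ))),
        ∀ s ∈ momentSet (Set.Icc (-1 : ℝ) 0),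
          (fun k => F (s k)) ∈ momentSet (Set.Icc (0 : ℝ) 1),
        ∃ G : ℝ → ℝ, AbsolutelyMonotonicEntire G ∧ (∀ x > (0 : ℝ), F x = G x) ∧
          (∀ x < (0 : ℝ), F x = G (-x)) ∧ 0 ≤ F 0 ∧
          ∃ L : ℝ, Tendsto F (nhdsWithin 0 {(0 : ℝ)}ᶜ) (nhds L) ∧ F 0 ≤ L] :=
  (List.tfae_cons_cons.1 (moment_transform_Icc_neg_one_zero_even_TFAE_general u₀ hu₀ F)).2
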